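/- Let n, d, k be integers with d ≥ 3 and 5 ≤ k ≤ n, and let A ⊆ [2^n]^d satisfy Vol(A) ≤ 1/2. Then E[|μ_k([2^n]^d)|]·Vol(A) ≤ 2·(√2)^{16−k}·Per(A). -/

import Mathlib

open MeasureTheory Finset

noncomputable section

/-- Points of the grid `[2^n]^d` (coordinates taken 0-based). -/
abbrev GridPt (n d : ℕ) := Fin d → Fin (2^n)

/-- Normalized counting "volume" of a subset of the grid: `Vol(A) = 2^{-nd}|A|`. -/
def Vol (n d : ℕ) (A : Finset (GridPt n d)) : ℝ := (A.card : ℝ) / 2^(n*d)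

/-- The ℓ1 metric on the grid. -/
def gdist {n d : ℕ} (u v : GridPt n d) : ℝ := ∑ i, |((u i : ℕ) : ℝ) - ((v i : ℕ) : ℝ)|

/-- Indices of the dyadic cubes in `D_k`. -/
abbrev CubeIdx (d k : ℕ) := Fin d → Fin (2^k)

/-- The dyadic cube of side-cardinality `2^(n-k)` indexed by `j ∈ {0,…,2^k-1}^d`. -/
def cube (n d k : ℕ) (j : CubeIdx d k) : Finset (GridPt n d) :=
  Finset.univ.filter (fun x => ∀ i, (x i : ℕ) / 2^(n-k) = (j i : ℕ))

/-- `p = 2^{-4d}`. -/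
def pp (d : ℕ) : ℝ := ((2:ℝ)^(4*d))⁻¹

/-- The law of each `X_Q`: takes values `±1` with probability `p/2` each
and `0` with probability `1-p`. -/
def stepMeasure (d : ℕ) : Measure ℝ :=
  (Real.toNNReal (pp d / 2)) • Measure.dirac (1:ℝ)
  + (Real.toNNReal (pp d / 2)) • Measure.dirac (-1:ℝ)
  + (Real.toNNReal (1 - pp d)) • Measure.dirac (0:ℝ)

instance (d : ℕ) : IsFiniteMeasure (stepMeasure d) := by
  unfold stepMeasure; infer_instance

/-- The joint law of the i.i.d. family `{X_Q}_{Q ∈ D_k}`; a sample point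
`ω : CubeIdx d k → ℝ` records the values `X_Q = ω Q`. -/
def prodMeasure (d k : ℕ) : Measure (CubeIdx d k → ℝ) :=
  Measure.pi fun _ => stepMeasure d

/-- `μ_k(A) = ∑_{Q ∈ D_k} p⁻¹ 2^k X_Q Vol(A ∩ Q)`, as a function of the sample point `ω`. -/
def muMeas (n d k : ℕ) (A : Finset (GridPt n d)) (ω : CubeIdx d k → ℝ) : ℝ :=
  ∑ j : CubeIdx d k, (pp d)⁻¹ * 2^k * ω j * Vol n d (A ∩ cube n d k j)

/-- Ordered edges of the grid graph (each unordered edge `{u, u+e_i}` listed exactly once,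
in the increasing direction). -/
def edgePairs (n d : ℕ) : Finset (GridPt n d × GridPt n d) :=
  Finset.univ.filter (fun e =>
    ∃ i, ((e.2 i : ℕ) = (e.1 i : ℕ) + 1) ∧ ∀ j, j ≠ i → e.2 j = e.1 j)

/-- The edge boundary `∂A` of a subset `A` of the grid. -/
def bdry (n d : ℕ) (A : Finset (GridPt n d)) : Finset (GridPt n d × GridPt n d) :=
  (edgePairs n d).filter (fun e => (e.1 ∈ A ∧ e.2 ∉ A) ∨ (e.1 ∉ A ∧ e.2 ∈ A))

/-- The normalized perimeter `Per(A) = (1/d)·2^{-n(d-1)}·|∂A|`. -/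
def Per (n d : ℕ) (A : Finset (GridPt n d)) : ℝ :=
  (1/(d:ℝ)) * ((2:ℝ)^(n*(d-1)))⁻¹ * ((bdry n d A).card : ℝ)


lemma stepMeasure_prob (d : ℕ) : IsProbabilityMeasure (stepMeasure d) := by
  have h0 : 0 ≤ pp d := by unfold pp; positivity
  have h1 : pp d ≤ 1 := by
    unfold pp
    exact inv_le_one_of_one_le₀ (one_le_pow₀ (by norm_num))
  constructor
  have : Real.toNNReal (pp d / 2) + Real.toNNReal (pp d / 2) + Real.toNNReal (1 - pp d) = 1 := by
    rw [← Real.toNNReal_add (by positivity) (by positivity),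
      ← Real.toNNReal_add (by positivity) (by linarith)]
    simp
  simp only [stepMeasure, Measure.add_apply, Measure.smul_apply, measure_univ]
  simp only [ENNReal.smul_def, smul_eq_mul, mul_one]
  exact_mod_cast this

lemma integrable_step (d : ℕ) (f : ℝ → ℝ) : Integrable f (stepMeasure d) := by
  unfold stepMeasure
  refine Integrable.add_measure (Integrable.add_measure ?_ ?_) ?_ <;>
  exact (integrable_dirac (by simp)).smul_measure_nnreal

lemma integral_step (d : ℕ) (f : ℝ → ℝ) :
    ∫ x, f x ∂(stepMeasure d) = pp d / 2 * f 1 + pp d / 2 * f (-1) + (1 - pp d) * f 0 := by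
  have h0 : 0 ≤ pp d := by unfold pp; positivity
  have h1 : pp d ≤ 1 := by
    unfold pp
    exact inv_le_one_of_one_le₀ (one_le_pow₀ (by norm_num))
  have hI : ∀ (c : NNReal) (a : ℝ), Integrable f (c • Measure.dirac a) := fun c a =>
    (integrable_dirac (by simp)).smul_measure_nnreal
  unfold stepMeasure
  rw [integral_add_measure ((hI _ _).add_measure (hI _ _)) (hI _ _),
    integral_add_measure (hI _ _) (hI _ _)]
  simp only [integral_smul_nnreal_measure, integral_dirac, NNReal.smul_def, smul_eq_mul]
  rw [Real.coe_toNNReal _ (by positivity), Real.coe_toNNReal _ (by linarith)]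

lemma second_moment (d k : ℕ) (c : CubeIdx d k → ℝ) :
    (∫ ω, |∑ j, c j * ω j| ∂(prodMeasure d k))^2 ≤ pp d * ∑ j, c j ^ 2 := by
  have := stepMeasure_prob d
  have : IsProbabilityMeasure (prodMeasure d k) := by unfold prodMeasure; infer_instance
  have hmp : ∀ j : CubeIdx d k, MeasurePreserving (fun ω : CubeIdx d k → ℝ => ω j)
      (prodMeasure d k) (stepMeasure d) := fun j =>
    measurePreserving_eval (fun _ : CubeIdx d k => stepMeasure d) j
  have hL0 : MemLp (fun x : ℝ => x) 2 (stepMeasure d) :=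
    (memLp_two_iff_integrable_sq measurable_id.aestronglyMeasurable).2 (integrable_step d _)
  have hL : ∀ j : CubeIdx d k, MemLp (fun ω : CubeIdx d k → ℝ => ω j) 2 (prodMeasure d k) :=
    fun j => hL0.comp_measurePreserving (hmp j)
  have hLc : ∀ j : CubeIdx d k, MemLp (fun ω : CubeIdx d k → ℝ => c j * ω j) 2 (prodMeasure d k) :=
    fun j => (hL j).const_mul (c j)
  have hmean : ∀ j : CubeIdx d k, ∫ ω, ω j ∂(prodMeasure d k) = 0 := by
    intro j
    have h2 := integral_map (μ := prodMeasure d k) (φ := fun ω : CubeIdx d k → ℝ => ω j)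
      (hmp j).measurable.aemeasurable (f := fun x : ℝ => x) measurable_id.aestronglyMeasurable
    rw [← h2, (hmp j).map_eq, integral_step]
    ring
  have hsq : ∀ j : CubeIdx d k, ∫ ω, (ω j)^2 ∂(prodMeasure d k) = pp d := by
    intro j
    have h2 := integral_map (μ := prodMeasure d k) (φ := fun ω : CubeIdx d k → ℝ => ω j)
      (hmp j).measurable.aemeasurable (f := fun x : ℝ => x^2)
      (measurable_id.pow_const 2).aestronglyMeasurable
    rw [← h2, (hmp j).map_eq, integral_step]
    ring
  have hind : ProbabilityTheory.iIndepFun (fun (j : CubeIdx d k) (ω : CubeIdx d k → ℝ) => c j * ω j)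
      (prodMeasure d k) :=
    ProbabilityTheory.iIndepFun_pi (μ := fun _ : CubeIdx d k => stepMeasure d)
      (X := fun j x => c j * x) (fun j => (measurable_id.const_mul (c j)).aemeasurable)
  have hvar := ProbabilityTheory.IndepFun.variance_sum (μ := prodMeasure d k)
    (X := fun (j : CubeIdx d k) (ω : CubeIdx d k → ℝ) => c j * ω j) (s := Finset.univ)
    (fun j _ => hLc j) (fun i _ j _ hij => hind.indepFun hij)
  have hS : MemLp (fun ω : CubeIdx d k → ℝ => ∑ j, c j * ω j) 2 (prodMeasure d k) :=
    memLp_finsetSum _ (fun j _ => hLc j)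
  have hSmean : ∫ ω, ∑ j, c j * ω j ∂(prodMeasure d k) = 0 := by
    rw [integral_finsetSum _ (fun j _ => (hLc j).integrable (by norm_num))]
    simp [integral_const_mul, hmean]
  have e1 : (∑ j, fun ω : CubeIdx d k → ℝ => c j * ω j) = fun ω => ∑ j, c j * ω j := by
    ext ω; simp
  rw [e1, ProbabilityTheory.variance_of_integral_eq_zero hS.aestronglyMeasurable.aemeasurable hSmean]
    at hvar
  have hv : ∀ j : CubeIdx d k, ProbabilityTheory.variance
      (fun ω : CubeIdx d k → ℝ => c j * ω j) (prodMeasure d k) = c j ^ 2 * pp d := by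
    intro j
    rw [ProbabilityTheory.variance_of_integral_eq_zero (hLc j).aestronglyMeasurable.aemeasurable
      (by simp [integral_const_mul, hmean])]
    simp only [mul_pow, integral_const_mul, hsq]
  simp only [hv] at hvar
  rw [← Finset.sum_mul] at hvar
  have habs : MemLp (fun ω : CubeIdx d k → ℝ => |∑ j, c j * ω j|) 2 (prodMeasure d k) := hS.abs
  have hpos := ProbabilityTheory.variance_nonneg
    (fun ω : CubeIdx d k → ℝ => |∑ j, c j * ω j|) (prodMeasure d k)
  rw [ProbabilityTheory.variance_eq_sub habs] at hpos
  have e2 : (∫ ω, ((fun ω : CubeIdx d k → ℝ => |∑ j, c j * ω j|) ^ 2) ω ∂(prodMeasure d k)) =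
      (∑ j, c j ^ 2) * pp d := by
    rw [← hvar]; congr 1; ext ω; simp [sq_abs]
  rw [e2] at hpos
  linarith

lemma vol_cube_le (n d k : ℕ) (hkn : k ≤ n) (j : CubeIdx d k) :
    Vol n d (Finset.univ ∩ cube n d k j) ≤ ((2:ℝ)^(k*d))⁻¹ := by
  have hc : (Finset.univ ∩ cube n d k j).card ≤ (2^(n-k))^d := by
    have : Fintype.card (Fin d → Fin (2^(n-k))) = (2^(n-k))^d := by simp
    rw [← this, ← Finset.card_univ]
    refine Finset.card_le_card_of_injOn
      (fun x i => ⟨(x i : ℕ) % 2^(n-k), Nat.mod_lt _ (by positivity)⟩) (by simp) ?_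
    intro x hx y hy hxy
    simp [cube] at hx hy
    ext i
    have h1 := congrFun hxy i
    simp at h1
    rw [← Nat.div_add_mod (x i : ℕ) (2^(n-k)), ← Nat.div_add_mod (y i : ℕ) (2^(n-k)), hx i, hy i, h1]
  unfold Vol
  have hc' : ((Finset.univ ∩ cube n d k j).card : ℝ) ≤ (2^(n-k))^d := by exact_mod_cast hc
  rw [div_le_iff₀ (by positivity)]
  refine hc'.trans (le_of_eq ?_)
  rw [← pow_mul, eq_inv_mul_iff_mul_eq₀ (by positivity), ← pow_add, ← add_mul]
  congr 2; omega

lemma mass_sq_le (n d k : ℕ) (hkn : k ≤ n) :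
    (∫ ω, |muMeas n d k Finset.univ ω| ∂(prodMeasure d k))^2 ≤
      (2:ℝ)^(4*d+2*k) / 2^(k*d) := by
  have hp : 0 < pp d := by unfold pp; positivity
  have h := second_moment d k (fun j => (pp d)⁻¹ * 2^k * Vol n d (Finset.univ ∩ cube n d k j))
  have e : (fun ω : CubeIdx d k → ℝ => |muMeas n d k Finset.univ ω|) =
    fun ω => |∑ j, (pp d)⁻¹ * 2^k * Vol n d (Finset.univ ∩ cube n d k j) * ω j| := by
    ext ω; unfold muMeas; congr 1; refine Finset.sum_congr rfl (fun j _ => by ring)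
  rw [e]
  refine h.trans ?_
  have hb : ∑ j : CubeIdx d k, ((pp d)⁻¹ * 2^k * Vol n d (Finset.univ ∩ cube n d k j))^2 ≤
      ∑ j : CubeIdx d k, ((pp d)⁻¹ * 2^k * ((2:ℝ)^(k*d))⁻¹)^2 := by
    refine Finset.sum_le_sum (fun j _ => ?_)
    have := vol_cube_le n d k hkn j
    have h0 : 0 ≤ Vol n d (Finset.univ ∩ cube n d k j) := by unfold Vol; positivity
    gcongr
  refine (mul_le_mul_of_nonneg_left hb hp.le).trans (le_of_eq ?_)
  rw [Finset.sum_const, Finset.card_univ]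
  simp only [Fintype.card_pi, Fintype.card_fin, Finset.prod_const, Finset.card_univ, nsmul_eq_mul]
  push_cast
  rw [← pow_mul]
  unfold pp
  have : (2:ℝ)^(4*d+2*k) = 2^(4*d) * (2^k)^2 := by rw [pow_add, ← pow_mul, mul_comm 2 k]
  rw [this]
  field_simp

/-- boundary edges on the line through `z` in direction `i` -/
def lineB (n d : ℕ) (A : Finset (GridPt n d)) (i : Fin d) (z : GridPt n d) :
    Finset (GridPt n d × GridPt n d) :=
  (bdry n d A).filter (fun e => ∀ j, j ≠ i → e.1 j = z j ∧ e.2 j = z j)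

lemma lineB_empty (n d : ℕ) (A : Finset (GridPt n d)) (i : Fin d) (z : GridPt n d)
    (h : lineB n d A i z = ∅) (t : Fin (2^n)) : z ∈ A ↔ Function.update z i t ∈ A := by
  have step : ∀ m (hm : m + 1 < 2^n), (Function.update z i ⟨m, by omega⟩ ∈ A ↔
      Function.update z i ⟨m+1, hm⟩ ∈ A) := by
    intro m hm
    by_contra hne
    have : (Function.update z i ⟨m, by omega⟩, Function.update z i ⟨m+1, hm⟩) ∈ lineB n d A i z := by
      simp only [lineB, bdry, edgePairs, Finset.mem_filter, Finset.mem_univ, true_and]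
      refine ⟨⟨⟨i, by simp, fun j hj => by simp [hj]⟩, by tauto⟩, fun j hj => by simp [hj]⟩
    rw [h] at this
    simp at this
  have all : ∀ m (hm : m < 2^n), (Function.update z i ⟨0, by positivity⟩ ∈ A ↔
      Function.update z i ⟨m, hm⟩ ∈ A) := by
    intro m
    induction m with
    | zero => intro _; rfl
    | succ m ih => intro hm; exact (ih (by omega)).trans (step m hm)
  have h1 := all (z i) (z i).2
  have h2 := all t t.2
  simp only [Fin.eta, Function.update_eq_self] at h1 h2
  exact h1.symm.trans h2

def hyb (n d : ℕ) (i : ℕ) (x y : GridPt n d) : GridPt n d := fun j => if (j:ℕ) < i then y j else x j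

lemma one_le_sum (n d : ℕ) (A : Finset (GridPt n d)) (x y : GridPt n d) (hx : x ∈ A) (hy : y ∉ A) :
    1 ≤ ∑ i : Fin d, (lineB n d A i (hyb n d i x y)).card := by
  by_contra hlt
  have hz : ∑ i : Fin d, (lineB n d A i (hyb n d i x y)).card = 0 := by omega
  rw [Finset.sum_eq_zero_iff] at hz
  have all : ∀ m, m ≤ d → hyb n d m x y ∈ A := by
    intro m
    induction m with
    | zero => intro _; have e0 : hyb n d 0 x y = x := by { ext j; simp [hyb] }; rw [e0]; exact hx
    | succ m ih =>
      intro hm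
      have h1 := hz ⟨m, by omega⟩ (Finset.mem_univ _)
      have h2 := (lineB_empty n d A _ _ (Finset.card_eq_zero.1 h1) (y ⟨m, by omega⟩)).1
        (ih (by omega))
      convert h2 using 1
      ext j
      unfold hyb Function.update
      by_cases hj : j = ⟨m, by omega⟩
      · subst hj; simp
      · have : (j:ℕ) ≠ m := fun h => hj (Fin.ext h)
        simp only [hj, dite_false]
        have : (j:ℕ) < m + 1 ↔ (j:ℕ) < m := by omega
        simp [this]
  have h := all d le_rfl
  apply hy
  convert h using 1
  ext j; simp [hyb]

lemma hyb_sum (n d : ℕ) (i : ℕ) (f : GridPt n d → ℕ) :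
    ∑ q : GridPt n d × GridPt n d, f (hyb n d i q.1 q.2) = 2^(n*d) * ∑ z, f z := by
  have hinv : Function.Involutive (fun q : GridPt n d × GridPt n d =>
      (hyb n d i q.1 q.2, hyb n d i q.2 q.1)) := by
    rintro ⟨x, y⟩
    ext j <;> simp only [hyb] <;> split_ifs <;> rfl
  have h := Equiv.sum_comp hinv.toPerm (fun q => f q.1)
  simp only [Function.Involutive.coe_toPerm] at h
  rw [h, Fintype.sum_prod_type]
  simp [Finset.mul_sum, pow_mul]

lemma lineB_sum (n d : ℕ) (A : Finset (GridPt n d)) :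
    ∑ i : Fin d, ∑ z, (lineB n d A i z).card ≤ 2^n * (bdry n d A).card := by
  rw [← Fintype.sum_prod_type' (f := fun i z => (lineB n d A i z).card)]
  simp only [lineB, Finset.card_filter]
  rw [Finset.sum_comm, mul_comm, ← smul_eq_mul]
  refine Finset.sum_le_card_nsmul _ _ _ (fun e he => ?_)
  rw [← Finset.card_filter]
  simp only [bdry, edgePairs, Finset.mem_filter, Finset.mem_univ, true_and] at he
  obtain ⟨⟨i0, h1, h2⟩, -⟩ := he
  have key : ∀ q : Fin d × GridPt n d, (∀ j, j ≠ q.1 → e.1 j = q.2 j ∧ e.2 j = q.2 j) → q.1 = i0 := by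
    intro q hq
    by_contra hne
    have := hq i0 (Ne.symm hne)
    rw [this.1, this.2] at h1
    omega
  have hcd : (Finset.univ : Finset (Fin (2^n))).card = 2^n := by simp
  refine le_trans ?_ hcd.le
  refine Finset.card_le_card_of_injOn (fun q => q.2 i0) (by simp) ?_
  intro q hq r hr hqr
  simp only [Finset.coe_filter, Finset.mem_univ, true_and, Set.mem_setOf_eq] at hq hr
  have e1 := key q hq
  have e2 := key r hr
  refine Prod.ext (e1.trans e2.symm) ?_
  funext j
  by_cases hj : j = i0
  · rw [hj]; exact hqr
  · rw [← (hq j (by rwa [e1])).1, (hr j (by rwa [e2])).1]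

lemma card_mul_le (n d : ℕ) (A : Finset (GridPt n d)) :
    A.card * (2^(n*d) - A.card) ≤ 2^(n*d) * (2^n * (bdry n d A).card) := by
  have hc : Aᶜ.card = 2^(n*d) - A.card := by
    rw [Finset.card_compl]; simp [pow_mul]
  rw [← hc, ← Finset.card_product]
  calc (A ×ˢ Aᶜ).card = ∑ q ∈ A ×ˢ Aᶜ, 1 := by simp
    _ ≤ ∑ q ∈ A ×ˢ Aᶜ, ∑ i : Fin d, (lineB n d A i (hyb n d i q.1 q.2)).card := by
        refine Finset.sum_le_sum (fun q hq => ?_)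
        simp only [Finset.mem_product, Finset.mem_compl] at hq
        exact one_le_sum n d A _ _ hq.1 hq.2
    _ ≤ ∑ q : GridPt n d × GridPt n d, ∑ i : Fin d, (lineB n d A i (hyb n d i q.1 q.2)).card :=
        Finset.sum_le_sum_of_subset (Finset.subset_univ _)
    _ = ∑ i : Fin d, 2^(n*d) * ∑ z, (lineB n d A i z).card := by
        rw [Finset.sum_comm]
        exact Finset.sum_congr rfl (fun i _ => hyb_sum n d i (fun z => (lineB n d A i z).card))
    _ ≤ _ := by
        rw [← Finset.mul_sum]
        exact Nat.mul_le_mul_left _ (lineB_sum n d A)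

lemma vol_le_per (n d : ℕ) (hd : 3 ≤ d) (A : Finset (GridPt n d)) (hVol : Vol n d A ≤ 1/2) :
    Vol n d A ≤ 2 * d * Per n d A := by
  have h := card_mul_le n d A
  unfold Vol at *
  rw [div_le_iff₀ (by positivity)] at hVol
  have hle : A.card ≤ 2^(n*d) := by
    have := Finset.card_le_univ A
    simpa [pow_mul] using this
  have h' : (A.card:ℝ) * (2^(n*d) - A.card) ≤ 2^(n*d) * (2^n * (bdry n d A).card) := by
    have : ((A.card * (2^(n*d) - A.card) : ℕ):ℝ) ≤ ((2^(n*d) * (2^n * (bdry n d A).card) : ℕ):ℝ) := by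
      exact_mod_cast h
    push_cast [Nat.cast_sub hle] at this
    exact this
  have h2 : (A.card:ℝ) * (1/2) ≤ 2^n * (bdry n d A).card := by
    have hN : (0:ℝ) < 2^(n*d) := by positivity
    have : (2:ℝ)^(n*d) * ((A.card:ℝ) * (1/2)) ≤ 2^(n*d) * (2^n * (bdry n d A).card) := by
      refine le_trans ?_ h'
      have h0 : (0:ℝ) ≤ A.card := by positivity
      nlinarith
    exact le_of_mul_le_mul_left this hN
  have hd0 : (d:ℝ) ≠ 0 := by positivity
  have hpow : (2:ℝ)^(n*d) = 2^n * 2^(n*(d-1)) := by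
    rw [← pow_add]; congr 1
    obtain ⟨c, rfl⟩ : ∃ c, d = c + 1 := ⟨d-1, by omega⟩
    simp; ring
  unfold Per
  rw [div_le_iff₀ (by positivity), hpow]
  have : 2 * (d:ℝ) * (1 / (d:ℝ) * ((2:ℝ)^(n*(d-1)))⁻¹ * (bdry n d A).card) * (2^n * 2^(n*(d-1)))
      = 2 * (2^n * (bdry n d A).card) := by
    field_simp
  rw [this]; linarith

lemma sq_le_two_pow (d : ℕ) (hd : 3 ≤ d) : d^2 ≤ 2^(d+1) := by
  induction d, hd using Nat.le_induction with
  | base => norm_num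
  | succ m hm ih => rw [pow_succ 2 (m+1)]; nlinarith

/-- `E[|μ_k([2^n]^d)|]·Vol(A) ≤ 2·(√2)^{16-k}·Per(A)` for `5 ≤ k ≤ n` and `Vol(A) ≤ 1/2`. -/
theorem expected_total_mass_mul_vol_le (n d k : ℕ) (hd : 3 ≤ d) (hk : 5 ≤ k) (hkn : k ≤ n)
    (A : Finset (GridPt n d)) (hVol : Vol n d A ≤ 1/2) :
    (∫ ω, |muMeas n d k Finset.univ ω| ∂(prodMeasure d k)) * Vol n d A
      ≤ 2 * Real.sqrt 2 ^ ((16:ℝ) - (k:ℝ)) * Per n d A := by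
  have hE := mass_sq_le n d k hkn
  have hV := vol_le_per n d hd A hVol
  set E := ∫ ω, |muMeas n d k Finset.univ ω| ∂(prodMeasure d k) with hEdef
  have hE0 : 0 ≤ E := integral_nonneg (fun ω => abs_nonneg _)
  have hP : 0 ≤ Per n d A := by unfold Per; positivity
  have hR0 : 0 ≤ Real.sqrt 2 ^ ((16:ℝ) - (k:ℝ)) := by positivity
  have hR : (Real.sqrt 2 ^ ((16:ℝ) - (k:ℝ)))^2 = 2^16 / 2^k := by
    rw [Real.rpow_sub (by positivity)]
    have : Real.sqrt 2 ^ (16:ℝ) = Real.sqrt 2 ^ (16:ℕ) := by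
      rw [← Real.rpow_natCast]; norm_num
    rw [Real.rpow_natCast, this, div_pow, ← pow_mul, ← pow_mul, mul_comm 16 2, mul_comm k 2,
      pow_mul, pow_mul, Real.sq_sqrt (by norm_num)]
  have hED : E * d ≤ Real.sqrt 2 ^ ((16:ℝ) - (k:ℝ)) := by
    refine (abs_le_of_sq_le_sq' ?_ hR0).2
    rw [hR, mul_pow]
    have hd2 : (d:ℝ)^2 ≤ 2^(d+1) := by exact_mod_cast sq_le_two_pow d hd
    calc E^2 * (d:ℝ)^2 ≤ (2:ℝ)^(4*d+2*k) / 2^(k*d) * 2^(d+1) := by gcongr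
      _ ≤ 2^16 / 2^k := by
        rw [div_mul_eq_mul_div, div_le_div_iff₀ (by positivity) (by positivity), ← pow_add,
          ← pow_add, ← pow_add]
        refine pow_le_pow_right₀ (by norm_num) ?_
        obtain ⟨a, rfl⟩ := Nat.exists_eq_add_of_le hd
        obtain ⟨b, rfl⟩ := Nat.exists_eq_add_of_le hk
        nlinarith [Nat.zero_le (a*b)]
  calc E * Vol n d A ≤ E * (2 * d * Per n d A) := by gcongr
    _ = 2 * (E * d) * Per n d A := by ring
    _ ≤ _ := by gcongr
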